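/- Under the model assumptions (columns of M absolutely summable with p fixed, entries of Γ absolutely summable, δ with i.i.d. standard complex Gaussian entries, m/N → c > 0), the signal term γ̂_m^{sign}(λ) = d_m(λ)^H·((1/N)·M δ^H Γ δ M^H)·d_m(λ) satisfies sup_{λ∈[0,2π)} | γ̂_m^{sign}(λ) | → 0 almost surely as N → ∞. -/

import Mathlib

open MeasureTheory ProbabilityTheory Filter Matrix Real
open scoped ComplexOrder

noncomputable section

/-- Spectral norm (largest singular value) of a complex matrix. -/
def opNorm {a b : ℕ} (A : Matrix (Fin a) (Fin b) ℂ) : ℝ :=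
  ‖LinearMap.toContinuousLinearMap (Matrix.toEuclideanLin A)‖

/-- Fourier vector `d_m(λ) = m^{-1/2} (1, e^{-iλ}, …, e^{-i(m-1)λ})ᵀ`. -/
def dm (m : ℕ) (l : ℝ) : Fin m → ℂ :=
  fun j => (Real.sqrt m : ℂ)⁻¹ * Complex.exp (-(Complex.I) * ((j : ℕ) : ℂ) * (l : ℂ))

/-- Sum of the entries of the `k`-th superdiagonal of `A`, divided by `m`. -/
def supDiagAvg {m : ℕ} (A : Matrix (Fin m) (Fin m) ℂ) (k : ℕ) : ℂ :=
  (m : ℂ)⁻¹ * ∑ l : Fin m, if h : (l : ℕ) + k < m then A l ⟨(l : ℕ) + k, h⟩ else 0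

/-- Sum of the entries of the `k`-th subdiagonal of `A`, divided by `m`. -/
def subDiagAvg {m : ℕ} (A : Matrix (Fin m) (Fin m) ℂ) (k : ℕ) : ℂ :=
  (m : ℂ)⁻¹ * ∑ l : Fin m, if h : (l : ℕ) + k < m then A ⟨(l : ℕ) + k, h⟩ l else 0

/-- Averaged `k`-th diagonal of `A`, for `k : ℤ`. -/
def diagAvg {m : ℕ} (A : Matrix (Fin m) (Fin m) ℂ) (k : ℤ) : ℂ :=
  if 0 ≤ k then supDiagAvg A k.toNat else subDiagAvg A (-k).toNat

/-- The Toeplitzification operator `𝒯`. -/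
def toep {m : ℕ} (A : Matrix (Fin m) (Fin m) ℂ) : Matrix (Fin m) (Fin m) ℂ :=
  Matrix.of fun i j =>
    if (i : ℕ) ≤ (j : ℕ) then supDiagAvg A ((j : ℕ) - (i : ℕ))
    else star (supDiagAvg A ((i : ℕ) - (j : ℕ)))

/-- The standard complex Gaussian distribution (independent real and imaginary
parts, each `N(0, 1/2)`, so that the variance `E|x|²` equals `1`). -/
def stdComplexGaussian : Measure ℂ :=
  Measure.map (Complex.measurableEquivRealProd.symm)
    ((gaussianReal 0 (1/2)).prod (gaussianReal 0 (1/2)))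

/-- Outer product `z z^H` of a vector with itself. -/
def vecOuter {m : ℕ} (z : Fin m → ℂ) : Matrix (Fin m) (Fin m) ℂ :=
  Matrix.of fun a b => z a * star (z b)

instance matrixMeasurableSpace {m n : ℕ} : MeasurableSpace (Matrix (Fin m) (Fin n) ℂ) :=
  (inferInstance : MeasurableSpace (Fin m → Fin n → ℂ))

/-- `i`-th column of a matrix, as a vector. -/
def colv {m N : ℕ} (A : Matrix (Fin m) (Fin N) ℂ) (i : Fin N) : Fin m → ℂ := fun a => A a i

/-- Maronna fixed-point equation for the scatter-matrix estimator built on the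
sample vectors `z 0, …, z (N-1)`. -/
def isFP {m N : ℕ} (u : ℝ → ℝ) (z : Fin N → Fin m → ℂ)
    (S : Matrix (Fin m) (Fin m) ℂ) : Prop :=
  S = (N : ℂ)⁻¹ • ∑ i : Fin N,
        u ((m : ℝ)⁻¹ * (star (z i) ⬝ᵥ (S⁻¹ *ᵥ z i)).re) • vecOuter (z i)

/-- Truncated spectral density `γ_m(λ) = ∑_{|k| ≤ m-1} c_k e^{ikλ}`. -/
def symbolTrunc (cf : ℤ → ℂ) (m : ℕ) (l : ℝ) : ℂ :=
  ∑ k ∈ Finset.Icc (1 - (m : ℤ)) ((m : ℤ) - 1),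
    cf k * Complex.exp (Complex.I * (k : ℂ) * (l : ℂ))

/-- `‖γ‖_∞ = sup_{λ ∈ [0,2π)} |∑_{k ∈ ℤ} c_k e^{ikλ}|`. -/
def supSymbol (cf : ℤ → ℂ) : ℝ :=
  ⨆ l ∈ Set.Ico (0 : ℝ) (2 * π),
    ‖∑' k : ℤ, cf k * Complex.exp (Complex.I * (k : ℂ) * (l : ℂ))‖

/-- Grid point `λ_i = 2πi/⌊N^β⌋`. -/
def gridPt (N : ℕ) (β : ℝ) (i : ℕ) : ℝ :=
  2 * π * (i : ℝ) / (Nat.floor ((N : ℝ) ^ β) : ℝ)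

/-!
The quadratic form factors through the `p × p` matrix `Q = δᴴ Γ δ`, whose size does not grow with
`N`: it equals `N⁻¹ aᴴ Q a` with `a = Mᴴ d_m(λ)`. The entries of `d_m(λ)` have modulus `m^{-1/2}`,
so absolute summability of the columns of `M` gives `|a_s| ≤ K m^{-1/2}` for every `λ` at once, and
the supremum over `λ` is at most `K² ∑_{s,t} |Q_{st}| / (N m)`. By Cauchy–Schwarz, `𝔼|Q_{st}|` is
bounded by the second moment of the entries of `δ` times the entrywise `ℓ¹` norm of `Γ`. As
`1 / (N m)` is summable, the suprema are almost surely summable, hence tend to zero.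
-/

open scoped NNReal ENNReal Topology

section EntrywiseBounds

variable {ι κ R : Type*} [Fintype κ] [NonUnitalSeminormedRing R]

lemma norm_mulVec_apply_le (A : Matrix ι κ R) {v : κ → R} {b : ℝ} (hv : ∀ j, ‖v j‖ ≤ b) (i : ι) :
    ‖(A *ᵥ v) i‖ ≤ (∑ j, ‖A i j‖) * b := by
  rw [Finset.sum_mul]
  exact norm_sum_le_of_le _ fun j _ =>
    (norm_mul_le _ _).trans (mul_le_mul_of_nonneg_left (hv j) (norm_nonneg _))

lemma norm_dotProduct_mulVec_le [Fintype ι] (A : Matrix ι κ R) {u : ι → R} {v : κ → R}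
    {a b : ℝ} (hu : ∀ i, ‖u i‖ ≤ a) (hv : ∀ j, ‖v j‖ ≤ b) :
    ‖u ⬝ᵥ A *ᵥ v‖ ≤ a * (∑ i, ∑ j, ‖A i j‖) * b := by
  rw [mul_assoc, Finset.sum_mul, Finset.mul_sum]
  refine norm_sum_le_of_le _ fun i _ => (norm_mul_le _ _).trans ?_
  exact mul_le_mul (hu i) (norm_mulVec_apply_le A hv i) (norm_nonneg _)
    ((norm_nonneg _).trans (hu i))

lemma norm_star_dotProduct_mul_mul_conjTranspose_mulVec_le [Fintype ι] [StarRing R]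
    [NormedStarGroup R] (M : Matrix ι κ R) (Q : Matrix κ κ R) {d : ι → R} {K b : ℝ}
    (hb : 0 ≤ b) (hM : ∀ s, ∑ i, ‖M i s‖ ≤ K) (hd : ∀ i, ‖d i‖ ≤ b) :
    ‖star d ⬝ᵥ (M * Q * Mᴴ) *ᵥ d‖ ≤ (K * b) ^ 2 * ∑ s, ∑ t, ‖Q s t‖ := by
  have hMd (s : κ) : ‖(Mᴴ *ᵥ d) s‖ ≤ K * b := by
    refine (norm_mulVec_apply_le Mᴴ hd s).trans (mul_le_mul_of_nonneg_right ?_ hb)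
    simpa only [conjTranspose_apply, norm_star] using hM s
  have hfactor : star d ⬝ᵥ (M * Q * Mᴴ) *ᵥ d = star (Mᴴ *ᵥ d) ⬝ᵥ Q *ᵥ (Mᴴ *ᵥ d) := by
    rw [star_mulVec, conjTranspose_conjTranspose, ← mulVec_mulVec, ← mulVec_mulVec,
      dotProduct_mulVec]
  calc ‖star d ⬝ᵥ (M * Q * Mᴴ) *ᵥ d‖
      ≤ K * b * (∑ s, ∑ t, ‖Q s t‖) * (K * b) := by
        rw [hfactor]
        exact norm_dotProduct_mulVec_le Q (fun s => by simpa using hMd s) hMd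
    _ = (K * b) ^ 2 * ∑ s, ∑ t, ‖Q s t‖ := by ring

end EntrywiseBounds

lemma norm_dm_apply (m : ℕ) (l : ℝ) (j : Fin m) : ‖dm m l j‖ = (√m)⁻¹ := by
  have hphase : -Complex.I * ((j : ℕ) : ℂ) * (l : ℂ) = ((-(j : ℕ) * l : ℝ) : ℂ) * Complex.I := by
    push_cast; ring
  rw [dm, norm_mul, hphase, Complex.norm_exp_ofReal_mul_I, mul_one, norm_inv, Complex.norm_real,
    Real.norm_of_nonneg (Real.sqrt_nonneg _)]

lemma iSup_norm_dm_dotProduct_le {m p N : ℕ} (M : Matrix (Fin m) (Fin p) ℂ) {K : ℝ}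
    (hM : ∀ s, ∑ i, ‖M i s‖ ≤ K) (G : Matrix (Fin N) (Fin N) ℂ) (D : Matrix (Fin N) (Fin p) ℂ)
    (S : Set ℝ) :
    ⨆ l ∈ S, ‖star (dm m l) ⬝ᵥ (((N : ℂ)⁻¹ • (M * Dᴴ * G * D * Mᴴ)) *ᵥ dm m l)‖ ≤
      K ^ 2 * ∑ s, ∑ t, ‖((N : ℝ) * m)⁻¹ • (Dᴴ * G * D) s t‖ := by
  have hassoc : (N : ℂ)⁻¹ • (M * Dᴴ * G * D * Mᴴ) = M * ((N : ℂ)⁻¹ • (Dᴴ * G * D)) * Mᴴ := by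
    simp only [Matrix.mul_smul, Matrix.smul_mul, Matrix.mul_assoc]
  refine Real.iSup_le (fun l => Real.iSup_le (fun _ => ?_) (by positivity)) (by positivity)
  rw [hassoc]
  refine (norm_star_dotProduct_mul_mul_conjTranspose_mulVec_le M _ (by positivity) hM
    fun i => (norm_dm_apply m l i).le).trans_eq ?_
  simp only [mul_pow, inv_pow, Real.sq_sqrt (Nat.cast_nonneg m), Matrix.smul_apply, norm_smul,
    norm_inv, norm_mul, Complex.norm_natCast, Real.norm_natCast, mul_inv, ← Finset.mul_sum]
  ring

section Moments

variable {Ω E 𝕜 : Type*} [MeasurableSpace Ω] {P : Measure Ω}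

lemma eLpNorm_conjTranspose_mul_mul_apply_le [RCLike 𝕜] {ι κ σ τ : Type*} [Fintype ι] [Fintype κ]
    {p q r : ℝ≥0∞} [p.HolderTriple q r] (hr : 1 ≤ r) {X : Ω → Matrix ι σ 𝕜} {Y : Ω → Matrix κ τ 𝕜}
    (A : Matrix ι κ 𝕜) {s : σ} {t : τ} {a b : ℝ≥0∞}
    (hX : ∀ i, AEStronglyMeasurable (fun ω => X ω i s) P)
    (hY : ∀ j, AEStronglyMeasurable (fun ω => Y ω j t) P)
    (hXa : ∀ i, eLpNorm (fun ω => X ω i s) p P ≤ a)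
    (hYb : ∀ j, eLpNorm (fun ω => Y ω j t) q P ≤ b) :
    eLpNorm (fun ω => ((X ω)ᴴ * A * Y ω) s t) r P ≤ (∑ i, ∑ j, ‖A i j‖ₑ) * a * b := by
  have hterm (i : ι) (j : κ) :
      AEStronglyMeasurable (fun ω => star (X ω i s) * A i j * Y ω j t) P :=
    ((hX i).star.mul_const _).mul (hY j)
  have hholder (i : ι) (j : κ) :
      eLpNorm (fun ω => star (X ω i s) * A i j * Y ω j t) r P ≤ ‖A i j‖ₑ * a * b := by
    refine (eLpNorm_le_eLpNorm_mul_eLpNorm_of_nnnorm (p := p) (q := q) (hX i) (hY j)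
      (fun x y => star x * A i j * y) ‖A i j‖₊ (ae_of_all _ fun ω => ?_)).trans ?_
    · rw [nnnorm_mul, nnnorm_mul, nnnorm_star, mul_comm ‖X ω i s‖₊]
    · exact mul_le_mul' (mul_le_mul_right (hXa i) _) (hYb j)
  have hexpand : (fun ω => ((X ω)ᴴ * A * Y ω) s t) =
      ∑ i, ∑ j, fun ω => star (X ω i s) * A i j * Y ω j t := by
    ext ω
    simp only [Matrix.mul_apply, conjTranspose_apply, Finset.sum_mul, Finset.sum_apply]
    exact Finset.sum_comm
  rw [hexpand]
  simp only [Finset.sum_mul]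
  refine (eLpNorm_sum_le (fun i _ => Finset.aestronglyMeasurable_sum _ fun j _ => hterm i j)
    hr).trans (Finset.sum_le_sum fun i _ => ?_)
  exact (eLpNorm_sum_le (fun j _ => hterm i j) hr).trans (Finset.sum_le_sum fun j _ => hholder i j)

lemma ae_summable_norm_smul_of_eLpNorm_le [NormedAddCommGroup E] [NormedField 𝕜] [NormedSpace 𝕜 E]
    {ι : Type*} [Countable ι] {q : ℝ≥0∞} (hq : 1 ≤ q) {a : ι → 𝕜} (ha : Summable fun n => ‖a n‖)
    {f : ι → Ω → E} (hf : ∀ n, AEStronglyMeasurable (f n) P) {B : ℝ≥0∞} (hB : B ≠ ∞)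
    (hfB : ∀ n, eLpNorm (f n) q P ≤ B) :
    ∀ᵐ ω ∂P, Summable fun n => ‖a n • f n ω‖ := by
  refine summable_norm_of_tsum_eLpNorm_ne_top hq (f := fun n => a n • f n)
    (fun n => (hf n).const_smul _) (ne_top_of_le_ne_top ?_ (ENNReal.tsum_le_tsum fun n =>
      eLpNorm_const_smul_le.trans (mul_le_mul_right (hfB n) _)))
  rw [ENNReal.tsum_mul_right]
  exact ENNReal.mul_ne_top (tsum_enorm_ne_top_iff_summable_norm.2 ha) hB

lemma hasLaw_of_map_eq {α : Type*} [MeasurableSpace α] {μ : Measure α} [NeZero μ] {X : Ω → α}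
    (h : P.map X = μ) : HasLaw X μ P :=
  ⟨aemeasurable_of_map_neZero (by rwa [h]), h⟩

lemma eLpNorm_le_toNNReal_of_hasLaw [NormedAddCommGroup E] [MeasurableSpace E]
    [OpensMeasurableSpace E] {μ : Measure E} {X : Ω → E} (hX : HasLaw X μ P) {q : ℝ≥0∞}
    (hμ : MemLp id q μ) : eLpNorm X q P ≤ (eLpNorm id q μ).toNNReal := by
  rw [ENNReal.coe_toNNReal hμ.eLpNorm_ne_top, (hX.identDistrib HasLaw.id).eLpNorm_eq q]

end Moments

instance isProbabilityMeasure_stdComplexGaussian : IsProbabilityMeasure stdComplexGaussian :=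
  Measure.isProbabilityMeasure_map (MeasurableEquiv.measurable _).aemeasurable

lemma memLp_id_stdComplexGaussian {q : ℝ≥0∞} (hq : q ≠ ∞) : MemLp id q stdComplexGaussian := by
  have hgauss : MemLp id q (gaussianReal 0 (1 / 2)) := memLp_id_gaussianReal' q hq
  rw [stdComplexGaussian, MeasurableEquiv.memLp_map_measure_iff]
  exact memLp_re_im_iff.1 ⟨hgauss.comp_fst _, hgauss.comp_snd _⟩

lemma summable_inv_mul_of_tendsto_div {x : ℕ → ℝ} {c : ℝ} (hc : c ≠ 0)
    (hx : Tendsto (fun N : ℕ => x N / N) atTop (𝓝 c)) :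
    Summable fun N : ℕ => ((N : ℝ) * x N)⁻¹ := by
  have hsq : Summable fun N : ℕ => ‖((N : ℝ) ^ 2)⁻¹‖ :=
    (Real.summable_nat_pow_inv.2 one_lt_two).norm
  refine (hsq.mul_tendsto_const (Nat.cofinite_eq_atTop ▸ hx.inv₀ hc)).congr fun N => ?_
  rcases eq_or_ne (N : ℝ) 0 with hN | hN
  · simp [hN]
  · field_simp

-- The convention `0⁻¹ = 0` in `hm` is harmless: if `N * mdim N = 0`, the signal term vanishes.
theorem stmt19_general {Ω : Type*} [MeasurableSpace Ω] (P : Measure Ω) (mdim : ℕ → ℕ)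
    (hm : Summable fun N : ℕ => ((N : ℝ) * mdim N)⁻¹) (p : ℕ)
    (M : (N : ℕ) → Matrix (Fin (mdim N)) (Fin p) ℂ) (hM_col : ∃ K : ℝ, ∀ N s, ∑ i, ‖M N i s‖ ≤ K)
    (Γm : (N : ℕ) → Matrix (Fin N) (Fin N) ℂ)
    (hΓ_sum : ∃ K : ℝ, ∀ N, ∑ i : Fin N, ∑ j : Fin N, ‖Γm N i j‖ ≤ K)
    (δm : (N : ℕ) → Ω → Matrix (Fin N) (Fin p) ℂ)
    (hδ_meas : ∀ N i s, AEStronglyMeasurable (fun ω => δm N ω i s) P)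
    (hδ_L2 : ∃ C : ℝ≥0, ∀ N i s, eLpNorm (fun ω => δm N ω i s) 2 P ≤ C) :
    ∀ᵐ ω ∂P, Summable fun N : ℕ =>
      ⨆ l ∈ Set.Ico (0 : ℝ) (2 * π),
        ‖star (dm (mdim N) l) ⬝ᵥ
          (((N : ℂ)⁻¹ • (M N * (δm N ω)ᴴ * Γm N * δm N ω * (M N)ᴴ)) *ᵥ dm (mdim N) l)‖ := by
  obtain ⟨K, hK⟩ := hM_col
  obtain ⟨L, hL⟩ := hΓ_sum
  obtain ⟨C, hC⟩ := hδ_L2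
  have hL' (N : ℕ) : ∑ i, ∑ j, ‖Γm N i j‖ₑ ≤ ENNReal.ofReal L := by
    simpa only [← ofReal_norm, ENNReal.ofReal_sum_of_nonneg, Finset.sum_nonneg, norm_nonneg,
      implies_true] using ENNReal.ofReal_le_ofReal (hL N)
  have hentry (s t : Fin p) : ∀ᵐ ω ∂P, Summable fun N : ℕ =>
      ‖((N : ℝ) * mdim N)⁻¹ • ((δm N ω)ᴴ * Γm N * δm N ω) s t‖ := by
    refine ae_summable_norm_smul_of_eLpNorm_le (B := ENNReal.ofReal L * C * C) le_rfl hm.norm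
      (fun N => ?_) (by finiteness) fun N => ?_
    · simp only [Matrix.mul_apply, conjTranspose_apply]
      fun_prop
    · refine (eLpNorm_conjTranspose_mul_mul_apply_le (p := 2) (q := 2) le_rfl (Γm N)
        (hδ_meas N · s) (hδ_meas N · t) (hC N · s) (hC N · t)).trans ?_
      gcongr
      exact hL' N
  filter_upwards [ae_all_iff.2 fun s => ae_all_iff.2 (hentry s)] with ω hω
  exact .of_nonneg_of_le
    (fun N => Real.iSup_nonneg fun l => Real.iSup_nonneg fun _ => norm_nonneg _)
    (fun N => iSup_norm_dm_dotProduct_le (M N) (hK N) (Γm N) (δm N ω) _)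
    ((summable_sum fun s _ => summable_sum fun t _ => hω s t).mul_left _)

/-- Uniform almost-sure convergence to zero of the signal
term `γ̂_m^{sign}(λ) = d_m(λ)^H ((1/N) M δ^H Γ δ M^H) d_m(λ)`. -/
theorem stmt19
    {Ω : Type*} [MeasurableSpace Ω] (P : Measure Ω) [IsProbabilityMeasure P]
    (mdim : ℕ → ℕ) (c : ℝ) (hc : 0 < c)
    (hmc : Tendsto (fun N : ℕ => (mdim N : ℝ) / (N : ℝ)) atTop (nhds c))
    (p : ℕ)
    (M : (N : ℕ) → Matrix (Fin (mdim N)) (Fin p) ℂ)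
    (hM_col : ∃ K : ℝ, ∀ N s, ∑ i, ‖M N i s‖ ≤ K)
    (hM_bdd : ∃ K : ℝ, ∀ N, opNorm (M N) ≤ K)
    (Γm : (N : ℕ) → Matrix (Fin N) (Fin N) ℂ)
    (hΓ_psd : ∀ N, (Γm N).PosSemidef)
    (hΓ_sum : ∃ K : ℝ, ∀ N, ∑ i : Fin N, ∑ j : Fin N, ‖Γm N i j‖ ≤ K)
    (hΓ_bdd : ∃ K : ℝ, ∀ N, opNorm (Γm N) ≤ K)
    (δm : (N : ℕ) → Ω → Matrix (Fin N) (Fin p) ℂ)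
    (hδ_indep : ∀ N, iIndepFun
      (fun (ij : Fin N × Fin p) => fun ω => δm N ω ij.1 ij.2) P)
    (hδ_law : ∀ N i j, Measure.map (fun ω => δm N ω i j) P = stdComplexGaussian)
 :
    ∀ᵐ ω ∂P, Tendsto
      (fun N : ℕ =>
        ⨆ l ∈ Set.Ico (0 : ℝ) (2 * π),
          ‖star (dm (mdim N) l) ⬝ᵥ
            (((N : ℂ)⁻¹ • (M N * (δm N ω)ᴴ * Γm N * δm N ω * (M N)ᴴ)) *ᵥ
              dm (mdim N) l)‖)
      atTop (nhds 0) := by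
  have hlaw N i s := hasLaw_of_map_eq (hδ_law N i s)
  exact (stmt19_general P mdim (summable_inv_mul_of_tendsto_div hc.ne' hmc) p M hM_col Γm hΓ_sum δm
    (fun N i s => (hlaw N i s).aemeasurable.aestronglyMeasurable)
    ⟨_, fun N i s => eLpNorm_le_toNNReal_of_hasLaw (hlaw N i s)
      (memLp_id_stdComplexGaussian ENNReal.ofNat_ne_top)⟩).mono fun _ h => h.tendsto_atTop_zero

end
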